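/- Let F = X_{2,0}Y_1² + X_{1,1}Y_1Y_2 + X_{0,2}Y_2² and A_F = R/Ann_R(F), where R = K[x_{2,0}, x_{1,1}, x_{0,2}, y_1, y_2]. Let ℓ = a_{2,0}x_{2,0} + a_{1,1}x_{1,1} + a_{0,2}x_{0,2} + b_1y_1 + b_2y_2 ∈ [A_F]_1 and suppose either (i) b_1 ≠ 0, b_2 = 0 and a_{2,0} = 0; or (ii) b_2 ≠ 0, b_1 = 0 and a_{0,2} = 0; or (iii) a_{2,0} = a_{1,1} = a_{0,2} = 0 and (b_1, b_2) ≠ (0,0). Then the Jordan type of ℓ in A_F is P_{ℓ,A_F} = (3², 2², 1²). -/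

import Mathlib

open MvPolynomial

/-- The differential operator `∏_i ∂^{s i}/∂X_i^{s i}` acting on `K[X_i : i ∈ σ]`
(any order of composition gives the same operator, since partial derivatives commute). -/
noncomputable def diffOp {K : Type*} [CommSemiring K] {σ : Type*} [DecidableEq σ]
    (s : σ →₀ ℕ) : Module.End K (MvPolynomial σ K) :=
  (s.support.toList.map fun i =>
    ((MvPolynomial.pderiv i).toLinearMap : Module.End K (MvPolynomial σ K)) ^ s i).prod

/-- The apolarity (differentiation) action `f ∘ F` of a polynomial `f` on a polynomial `F`:
each variable of `f` acts as partial differentiation with respect to the corresponding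
variable of `F`. -/
noncomputable def diffAction {K : Type*} [CommSemiring K] {σ : Type*} [DecidableEq σ]
    (f F : MvPolynomial σ K) : MvPolynomial σ K :=
  ∑ s ∈ f.support, f.coeff s • diffOp s F

/-- The apolar annihilator ideal `Ann(F) = {f : f ∘ F = 0}`.  (This set is already an
ideal, so taking the ideal span does not change it.) -/
noncomputable def annIdeal {K : Type*} [CommSemiring K] {σ : Type*} [DecidableEq σ]
    (F : MvPolynomial σ K) : Ideal (MvPolynomial σ K) :=
  Ideal.span {f | diffAction f F = 0}

/-- The Perazzo threefold form `F = X_{2,0} Y_1² + X_{1,1} Y_1 Y_2 + X_{0,2} Y_2²`,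
with variables indexed by `Fin 5` as `x_{2,0}, x_{1,1}, x_{0,2}, y_1, y_2`. -/
noncomputable def toyPerazzoForm (K : Type*) [CommSemiring K] : MvPolynomial (Fin 5) K :=
  X 0 * X 3 ^ 2 + X 1 * X 3 * X 4 + X 2 * X 4 ^ 2

/-- The linear form `ℓ = a_{2,0} x_{2,0} + a_{1,1} x_{1,1} + a_{0,2} x_{0,2} + b_1 y_1 + b_2 y_2`. -/
noncomputable def toyLinForm {K : Type*} [CommSemiring K]
    (a20 a11 a02 b1 b2 : K) : MvPolynomial (Fin 5) K :=
  C a20 * X 0 + C a11 * X 1 + C a02 * X 2 + C b1 * X 3 + C b2 * X 4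

/-- The rank of the `k`-th power of the multiplication map `×ℓ : A → A`,
as a `K`-linear endomorphism. -/
noncomputable def rkPow {K A : Type*} [Field K] [CommRing A] [Algebra K A]
    (ℓ : A) (k : ℕ) : ℕ :=
  Module.finrank K (LinearMap.range ((LinearMap.mulLeft K ℓ) ^ k))

/-- `ℓ` has Jordan type (in the `K`-algebra `A`) given by the multiplicity function
`mult : ℕ → ℕ`: for every `k ≥ 1`, the number of Jordan blocks of size `k` of the
multiplication map `×ℓ` is `rank(×ℓ^{k-1}) - 2·rank(×ℓ^k) + rank(×ℓ^{k+1})`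
(written additively to avoid truncated subtraction). -/
def IsJordanTypeMult {K A : Type*} [Field K] [CommRing A] [Algebra K A]
    (ℓ : A) (mult : ℕ → ℕ) : Prop :=
  ∀ k : ℕ, 1 ≤ k → rkPow (K := K) ℓ (k - 1) + rkPow (K := K) ℓ (k + 1)
      = mult k + 2 * rkPow (K := K) ℓ k

/-!
A polynomial `f` annihilates `g ∘ F` if and only if `f * g` annihilates `F`, so the image of
multiplication by `g` on `R ⧸ Ann(F)` is isomorphic to `R ⧸ Ann(g ∘ F)`, and its dimension is that
of the space spanned by `g ∘ F` and all its partial derivatives. The ranks of `×ℓ^k` on `A_F` are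
thus read off the successive polars of `F`, counting derivatives order by order: `1 + 5 + 5 + 1`
for `F`, `1 + 4 + 1` for the quadric `ℓ ∘ F`, `1 + 1` for the nonzero linear form `ℓ² ∘ F`, and `0`
for `ℓ³ ∘ F = 6 F(a, b)`, where `(a, b)` is the coefficient vector of `ℓ`.
-/

section DiffAlgHom

variable {K σ : Type*} [CommSemiring K]

theorem pderiv_comm (i j : σ) (p : MvPolynomial σ K) :
    pderiv i (pderiv j p) = pderiv j (pderiv i p) := by
  classical
  induction p using MvPolynomial.induction_on' with
  | monomial s a =>
    obtain rfl | h := eq_or_ne i j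
    · rfl
    · simp [pderiv_monomial, tsub_right_comm, h, h.symm, mul_right_comm]
  | add p q hp hq => simp only [map_add, hp, hq]

variable (K σ) in
/-- The commutative algebra of constant-coefficient differential operators on `K[X_i : i ∈ σ]`. -/
noncomputable abbrev diffSubalgebra : Subalgebra K (Module.End K (MvPolynomial σ K)) :=
  Algebra.adjoin K (Set.range fun i : σ => (pderiv i).toLinearMap)

instance diffSubalgebra.isMulCommutative : IsMulCommutative (diffSubalgebra K σ) := by
  refine Algebra.isMulCommutative_adjoin K ?_
  rintro _ ⟨i, rfl⟩ _ ⟨j, rfl⟩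
  exact LinearMap.ext (pderiv_comm i j)

open scoped IsMulCommutative in
variable (K σ) in
/-- The apolarity action as an algebra homomorphism `f ↦ (F ↦ f ∘ F)`. It factors through
`diffSubalgebra K σ` because `aeval` needs a commutative target. -/
noncomputable def diffAlgHom : MvPolynomial σ K →ₐ[K] Module.End K (MvPolynomial σ K) :=
  (diffSubalgebra K σ).val.comp
    (aeval fun i => ⟨(pderiv i).toLinearMap, Algebra.subset_adjoin ⟨i, rfl⟩⟩)

@[simp]
theorem diffAlgHom_X_apply (i : σ) (p : MvPolynomial σ K) :
    diffAlgHom K σ (X i) p = pderiv i p := by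
  simp [diffAlgHom]

@[simp]
theorem diffAlgHom_C_apply (a : K) (p : MvPolynomial σ K) :
    diffAlgHom K σ (C a) p = a • p := by
  rw [← algebraMap_eq, AlgHom.commutes, Module.algebraMap_end_apply]

open scoped IsMulCommutative in
theorem diffAction_eq_diffAlgHom [DecidableEq σ] (f F : MvPolynomial σ K) :
    diffAction f F = diffAlgHom K σ f F := by
  rw [diffAlgHom, AlgHom.comp_apply, aeval_def, eval₂_eq, map_sum, LinearMap.sum_apply]
  refine Finset.sum_congr rfl fun s _ => ?_
  rw [← Algebra.smul_def, map_smul, LinearMap.smul_apply, diffOp, ← Finset.prod_map_toList,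
    map_list_prod, List.map_map]
  rfl

theorem mem_annIdeal_iff [DecidableEq σ] {f F : MvPolynomial σ K} :
    f ∈ annIdeal F ↔ diffAlgHom K σ f F = 0 := by
  refine ⟨fun h => ?_, fun h => Ideal.subset_span ((diffAction_eq_diffAlgHom f F).trans h)⟩
  induction h using Submodule.span_induction with
  | mem f hf => exact (diffAction_eq_diffAlgHom f F).symm.trans hf
  | zero => simp
  | add f g _ _ hf hg => simp [hf, hg]
  | smul g f _ hf => simp [hf]

end DiffAlgHom

section InverseSystem

variable {K σ : Type*}

/-- The inverse system `{f ∘ p : f ∈ R}` of `p`; it is isomorphic to `R ⧸ Ann(p)`. -/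
noncomputable def inverseSystem [CommSemiring K] (p : MvPolynomial σ K) :
    Submodule K (MvPolynomial σ K) :=
  LinearMap.range ((diffAlgHom K σ).toLinearMap.flip p)

theorem finrank_range_mulLeft_mk_annIdeal [Field K] [DecidableEq σ] (F g : MvPolynomial σ K) :
    Module.finrank K (LinearMap.range (LinearMap.mulLeft K (Ideal.Quotient.mk (annIdeal F) g))) =
      Module.finrank K (inverseSystem (diffAlgHom K σ g F)) := by
  let mk := (Ideal.Quotient.mkₐ K (annIdeal F)).toLinearMap
  have range_comp : LinearMap.range (LinearMap.mulLeft K (Ideal.Quotient.mk (annIdeal F) g) ∘ₗ mk) =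
      LinearMap.range (LinearMap.mulLeft K (Ideal.Quotient.mk (annIdeal F) g)) :=
    LinearMap.range_comp_of_range_eq_top _
      (LinearMap.range_eq_top.2 Ideal.Quotient.mk_surjective)
  have ker_eq : LinearMap.ker (LinearMap.mulLeft K (Ideal.Quotient.mk (annIdeal F) g) ∘ₗ mk) =
      LinearMap.ker ((diffAlgHom K σ).toLinearMap.flip (diffAlgHom K σ g F)) := by
    ext f
    calc Ideal.Quotient.mk (annIdeal F) g * Ideal.Quotient.mk (annIdeal F) f = 0
        ↔ f * g ∈ annIdeal F := by rw [← map_mul, mul_comm, Ideal.Quotient.eq_zero_iff_mem]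
      _ ↔ diffAlgHom K σ f (diffAlgHom K σ g F) = 0 := by
        rw [mem_annIdeal_iff, map_mul, Module.End.mul_apply]
  rw [← range_comp, inverseSystem, ← (LinearMap.quotKerEquivRange _).finrank_eq, ker_eq,
    (LinearMap.quotKerEquivRange _).finrank_eq]

theorem rkPow_mk_annIdeal [Field K] [DecidableEq σ] (F g : MvPolynomial σ K) (k : ℕ) :
    rkPow (K := K) (Ideal.Quotient.mk (annIdeal F) g) k =
      Module.finrank K (inverseSystem (((diffAlgHom K σ g) ^ k) F)) := by
  rw [rkPow, LinearMap.pow_mulLeft, ← map_pow, finrank_range_mulLeft_mk_annIdeal, map_pow]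

/-- The span of the first-order partial derivatives of the elements of `W`. For `p` homogeneous,
`partials^[j] (K ∙ p)` is dual to the degree `j` part of `R ⧸ Ann(p)`. -/
noncomputable def partials [CommSemiring K] (W : Submodule K (MvPolynomial σ K)) :
    Submodule K (MvPolynomial σ K) :=
  ⨆ i : σ, W.map (pderiv i).toLinearMap

section CommSemiring

variable [CommSemiring K] {W : Submodule K (MvPolynomial σ K)}

theorem pderiv_mem_partials {p : MvPolynomial σ K} (i : σ) (hp : p ∈ W) :
    pderiv i p ∈ partials W :=
  Submodule.mem_iSup_of_mem i (Submodule.mem_map_of_mem hp)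

theorem partials_le_iff {V : Submodule K (MvPolynomial σ K)} :
    partials W ≤ V ↔ ∀ i, ∀ p ∈ W, pderiv i p ∈ V := by
  simp only [partials, iSup_le_iff, Submodule.map_le_iff_le_comap]
  rfl

theorem partials_iSup {ι : Sort*} (V : ι → Submodule K (MvPolynomial σ K)) :
    partials (⨆ j, V j) = ⨆ j, partials (V j) := by
  simp only [partials, Submodule.map_iSup]
  exact iSup_comm

theorem partials_span_singleton (p : MvPolynomial σ K) :
    partials (K ∙ p) = Submodule.span K (Set.range fun i => pderiv i p) := by
  simp [partials, Submodule.map_span, Submodule.span_range_eq_iSup]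

theorem partials_le_homogeneousSubmodule {d : ℕ} (hW : W ≤ homogeneousSubmodule σ K d) :
    partials W ≤ homogeneousSubmodule σ K (d - 1) :=
  partials_le_iff.2 fun _ _ hp => IsHomogeneous.pderiv (hW hp)

theorem iterate_partials_le_homogeneousSubmodule {d : ℕ} (hW : W ≤ homogeneousSubmodule σ K d)
    (j : ℕ) : partials^[j] W ≤ homogeneousSubmodule σ K (d - j) := by
  induction j with
  | zero => exact hW
  | succ j ih =>
    rw [Function.iterate_succ_apply', Nat.sub_succ]
    exact partials_le_homogeneousSubmodule ih

theorem partials_eq_bot (hW : W ≤ homogeneousSubmodule σ K 0) : partials W = ⊥ := by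
  refine le_bot_iff.1 (partials_le_iff.2 fun i p hp => ?_)
  obtain ⟨a, rfl⟩ := Submodule.mem_one.1 (homogeneousSubmodule_zero (σ := σ) (R := K) ▸ hW hp)
  exact pderiv_C

theorem iSup_iterate_partials_eq_sup (W : Submodule K (MvPolynomial σ K)) :
    ⨆ j, partials^[j] W = W ⊔ ⨆ j, partials^[j] (partials W) :=
  (sup_iSup_nat_succ fun j => partials^[j] W).symm

theorem inverseSystem_eq_iSup (p : MvPolynomial σ K) :
    inverseSystem p = ⨆ j, partials^[j] (K ∙ p) := by
  apply le_antisymm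
  · have partials_le : partials (⨆ j, partials^[j] (K ∙ p)) ≤ ⨆ j, partials^[j] (K ∙ p) := by
      simp_rw [partials_iSup, ← Function.iterate_succ_apply' partials]
      exact iSup_le fun j => le_iSup (fun j => partials^[j] (K ∙ p)) (j + 1)
    rintro _ ⟨f, rfl⟩
    change diffAlgHom K σ f p ∈ _
    induction f using MvPolynomial.induction_on with
    | C a =>
      rw [diffAlgHom_C_apply]
      exact Submodule.mem_iSup_of_mem 0
        (Submodule.smul_mem _ a (Submodule.mem_span_singleton_self p))
    | add f g hf hg => simpa using Submodule.add_mem _ hf hg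
    | mul_X f i hf => simpa [mul_comm f] using partials_le (pderiv_mem_partials i hf)
  · refine iSup_le fun j => ?_
    induction j with
    | zero => exact (Submodule.span_singleton_le_iff_mem _ _).2 ⟨1, by simp⟩
    | succ j ih =>
      rw [Function.iterate_succ_apply', partials_le_iff]
      intro i q hq
      obtain ⟨f, rfl⟩ := ih hq
      exact ⟨X i * f, by simp⟩

end CommSemiring

variable [Field K]

variable (K σ) in
theorem finrank_homogeneousSubmodule_one [Fintype σ] :
    Module.finrank K (homogeneousSubmodule σ K 1) = Fintype.card σ := by
  rw [homogeneousSubmodule_one_eq_span_X]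
  exact finrank_span_eq_card (linearIndependent_X σ K)

theorem disjoint_homogeneousSubmodule_restrictTotalDegree {m n : ℕ} (h : n < m) :
    Disjoint (homogeneousSubmodule σ K m) (restrictTotalDegree σ K n) := by
  rw [Submodule.disjoint_def]
  intro p hp hp'
  by_contra hp0
  rw [mem_restrictTotalDegree, IsHomogeneous.totalDegree hp hp0] at hp'
  omega

theorem finiteDimensional_of_le_homogeneousSubmodule [Finite σ] {d : ℕ}
    {W : Submodule K (MvPolynomial σ K)} (hW : W ≤ homogeneousSubmodule σ K d) :
    FiniteDimensional K W :=
  have : FiniteDimensional K (homogeneousSubmodule σ K d) :=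
    Module.Finite.of_fg (homogeneousSubmodule_fg σ K d)
  Submodule.finiteDimensional_of_le hW

theorem iSup_iterate_partials_le_restrictTotalDegree {d : ℕ} {W : Submodule K (MvPolynomial σ K)}
    (hW : W ≤ homogeneousSubmodule σ K d) :
    ⨆ j, partials^[j] W ≤ restrictTotalDegree σ K d :=
  iSup_le fun j _ hp => (mem_restrictTotalDegree _ _ _).2 <|
    (iterate_partials_le_homogeneousSubmodule hW j hp).totalDegree_le.trans (Nat.sub_le d j)

theorem finrank_iSup_iterate_partials [Finite σ] {d : ℕ} {W : Submodule K (MvPolynomial σ K)}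
    (hW : W ≤ homogeneousSubmodule σ K d) :
    Module.finrank K ↥(⨆ j, partials^[j] W) =
      ∑ j ∈ Finset.range (d + 1), Module.finrank K ↥(partials^[j] W) := by
  induction d generalizing W with
  | zero =>
    have iSup_partials_eq_bot : ⨆ j, partials^[j] (⊥ : Submodule K (MvPolynomial σ K)) = ⊥ :=
      iSup_eq_bot.2 fun j => Function.iterate_fixed (partials_eq_bot bot_le) j
    rw [iSup_iterate_partials_eq_sup, partials_eq_bot hW, iSup_partials_eq_bot, sup_bot_eq,
      zero_add, Finset.sum_range_one, Function.iterate_zero_apply]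
  | succ d ih =>
    have hpartials := partials_le_homogeneousSubmodule hW
    have hle := iSup_iterate_partials_le_restrictTotalDegree hpartials
    have hdisjoint : Disjoint W (⨆ j, partials^[j] (partials W)) :=
      (disjoint_homogeneousSubmodule_restrictTotalDegree d.lt_succ_self).mono hW hle
    have := finiteDimensional_of_le_homogeneousSubmodule hW
    have := Submodule.finiteDimensional_of_le hle
    have hsup := Submodule.finrank_sup_add_finrank_inf_eq W (⨆ j, partials^[j] (partials W))
    rw [hdisjoint.eq_bot, finrank_bot, add_zero] at hsup
    rw [iSup_iterate_partials_eq_sup, hsup, ih hpartials, add_comm]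
    exact (Finset.sum_range_succ' (fun j => Module.finrank K ↥(partials^[j] W)) (d + 1)).symm

theorem finrank_inverseSystem [Finite σ] {d : ℕ} {p : MvPolynomial σ K} (hp : p.IsHomogeneous d) :
    Module.finrank K (inverseSystem p) =
      ∑ j ∈ Finset.range (d + 1), Module.finrank K ↥(partials^[j] (K ∙ p)) := by
  rw [inverseSystem_eq_iSup,
    finrank_iSup_iterate_partials ((Submodule.span_singleton_le_iff_mem _ _).2 hp)]

theorem finrank_partials_eq_one [Finite σ] {W : Submodule K (MvPolynomial σ K)}
    (hW : W ≤ homogeneousSubmodule σ K 1) (hW0 : W ≠ ⊥) : Module.finrank K (partials W) = 1 := by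
  have := Fintype.ofFinite σ
  have partials_le_one : partials W ≤ 1 :=
    homogeneousSubmodule_zero (σ := σ) (R := K) ▸ partials_le_homogeneousSubmodule hW
  have partials_ne_bot : partials W ≠ ⊥ := by
    obtain ⟨p, hp, hp0⟩ := Submodule.exists_mem_ne_zero_of_ne_bot hW0
    refine fun h => hp0 ?_
    have pderiv_eq_zero (i : σ) : pderiv i p = 0 := by
      simpa only [h, Submodule.mem_bot] using pderiv_mem_partials i hp
    simpa [pderiv_eq_zero] using (IsHomogeneous.sum_X_mul_pderiv (hW hp)).symm
  have finrank_one : Module.finrank K (1 : Submodule K (MvPolynomial σ K)) = 1 := by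
    rw [Submodule.one_eq_span, finrank_span_singleton one_ne_zero]
  have := Module.finite_of_finrank_eq_succ finrank_one
  have := Submodule.finiteDimensional_of_le partials_le_one
  exact le_antisymm ((Submodule.finrank_mono partials_le_one).trans_eq finrank_one)
    (Submodule.one_le_finrank_iff.2 partials_ne_bot)

theorem finrank_inverseSystem_of_isHomogeneous_one [Finite σ] {p : MvPolynomial σ K}
    (hp : p.IsHomogeneous 1) (hp0 : p ≠ 0) : Module.finrank K (inverseSystem p) = 2 := by
  have hle : K ∙ p ≤ homogeneousSubmodule σ K 1 :=
    (Submodule.span_singleton_le_iff_mem _ _).2 hp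
  rw [finrank_inverseSystem hp, Finset.sum_range_succ, Finset.sum_range_one,
    Function.iterate_zero_apply, Function.iterate_one, finrank_span_singleton hp0,
    finrank_partials_eq_one hle (mt Submodule.span_singleton_eq_bot.1 hp0)]

theorem finrank_inverseSystem_of_isHomogeneous_two [Finite σ] {p : MvPolynomial σ K}
    (hp : p.IsHomogeneous 2) (hpartials : partials (K ∙ p) ≠ ⊥) :
    Module.finrank K (inverseSystem p) = Module.finrank K (partials (K ∙ p)) + 2 := by
  have hle : K ∙ p ≤ homogeneousSubmodule σ K 2 :=
    (Submodule.span_singleton_le_iff_mem _ _).2 hp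
  have hp0 : p ≠ 0 := by
    rintro rfl
    exact hpartials (partials_eq_bot (by simp))
  rw [finrank_inverseSystem hp, Finset.sum_range_succ, Finset.sum_range_succ, Finset.sum_range_one,
    Function.iterate_zero_apply, Function.iterate_one, Function.iterate_succ_apply',
    Function.iterate_one, finrank_span_singleton hp0,
    finrank_partials_eq_one (partials_le_homogeneousSubmodule hle) hpartials]
  ring

end InverseSystem

section ToyPerazzo

variable {K : Type*}

section CommSemiring

variable [CommSemiring K] (a20 a11 a02 b1 b2 : K)

theorem isHomogeneous_toyPerazzoForm : (toyPerazzoForm K).IsHomogeneous 3 :=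
  (((isHomogeneous_X K 0).mul (isHomogeneous_X_pow 3 2)).add
    (((isHomogeneous_X K 1).mul (isHomogeneous_X K 3)).mul (isHomogeneous_X K 4))).add
      ((isHomogeneous_X K 2).mul (isHomogeneous_X_pow 4 2))

theorem isHomogeneous_toyLinForm : (toyLinForm a20 a11 a02 b1 b2).IsHomogeneous 1 :=
  ((((isHomogeneous_C_mul_X a20 0).add (isHomogeneous_C_mul_X a11 1)).add
    (isHomogeneous_C_mul_X a02 2)).add (isHomogeneous_C_mul_X b1 3)).add
      (isHomogeneous_C_mul_X b2 4)

theorem pderiv_toyPerazzoForm (i : Fin 5) :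
    pderiv i (toyPerazzoForm K) =
      ![X 3 ^ 2, X 3 * X 4, X 4 ^ 2, C 2 * X 0 * X 3 + X 1 * X 4,
        X 1 * X 3 + C 2 * X 2 * X 4] i := by
  rw [map_ofNat C 2]
  fin_cases i <;> simp [toyPerazzoForm, pderiv_X] <;> ring

theorem pderiv_toyLinForm (i : Fin 5) :
    pderiv i (toyLinForm a20 a11 a02 b1 b2) = C (![a20, a11, a02, b1, b2] i) := by
  fin_cases i <;> simp [toyLinForm, pderiv_X]

theorem toyLinForm_eq_zero_iff :
    toyLinForm a20 a11 a02 b1 b2 = 0 ↔ a20 = 0 ∧ a11 = 0 ∧ a02 = 0 ∧ b1 = 0 ∧ b2 = 0 := by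
  refine ⟨fun h => ?_, ?_⟩
  · have hcoeff (i : Fin 5) : ![a20, a11, a02, b1, b2] i = 0 := by
      rw [← C_eq_zero (σ := Fin 5), ← pderiv_toyLinForm, h, map_zero]
    exact ⟨hcoeff 0, hcoeff 1, hcoeff 2, hcoeff 3, hcoeff 4⟩
  · rintro ⟨rfl, rfl, rfl, rfl, rfl⟩
    simp [toyLinForm]

theorem toyLinForm_add (c20 c11 c02 d1 d2 : K) :
    toyLinForm a20 a11 a02 b1 b2 + toyLinForm c20 c11 c02 d1 d2 =
      toyLinForm (a20 + c20) (a11 + c11) (a02 + c02) (b1 + d1) (b2 + d2) := by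
  simp only [toyLinForm, C_add]
  ring

theorem smul_toyLinForm (c : K) :
    c • toyLinForm a20 a11 a02 b1 b2 =
      toyLinForm (c * a20) (c * a11) (c * a02) (c * b1) (c * b2) := by
  simp only [toyLinForm, smul_eq_C_mul, C_mul]
  ring

theorem diffAlgHom_toyLinForm_apply (p : MvPolynomial (Fin 5) K) :
    diffAlgHom K (Fin 5) (toyLinForm a20 a11 a02 b1 b2) p =
      a20 • pderiv 0 p + a11 • pderiv 1 p + a02 • pderiv 2 p + b1 • pderiv 3 p +
        b2 • pderiv 4 p := by
  simp [toyLinForm]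

/-- The first polar `ℓ ∘ F` of the Perazzo form `F` with respect to `ℓ`. -/
noncomputable def toyPolarQuadric : MvPolynomial (Fin 5) K :=
  X 3 * toyLinForm (2 * b1) b2 0 a20 a11 + X 4 * toyLinForm 0 b1 (2 * b2) 0 a02

theorem isHomogeneous_toyPolarQuadric : (toyPolarQuadric a20 a11 a02 b1 b2).IsHomogeneous 2 :=
  ((isHomogeneous_X K 3).mul (isHomogeneous_toyLinForm _ _ _ _ _)).add
    ((isHomogeneous_X K 4).mul (isHomogeneous_toyLinForm _ _ _ _ _))

theorem pderiv_toyPolarQuadric (i : Fin 5) :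
    pderiv i (toyPolarQuadric a20 a11 a02 b1 b2) =
      ![toyLinForm 0 0 0 (2 * b1) 0, toyLinForm 0 0 0 b2 b1, toyLinForm 0 0 0 0 (2 * b2),
        toyLinForm (2 * b1) b2 0 (2 * a20) a11, toyLinForm 0 b1 (2 * b2) a11 (2 * a02)] i := by
  have C_two : (C 2 : MvPolynomial (Fin 5) K) = 2 := map_ofNat C 2
  simp only [toyPolarQuadric, map_add, pderiv_mul, pderiv_toyLinForm]
  fin_cases i <;> simp [toyLinForm, pderiv_X, C_two] <;> ring

theorem linearCombination_pderiv_toyPolarQuadric (c : Fin 5 → K) :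
    Fintype.linearCombination K (fun i => pderiv i (toyPolarQuadric a20 a11 a02 b1 b2)) c =
      toyLinForm (c 3 * (2 * b1)) (c 3 * b2 + c 4 * b1) (c 4 * (2 * b2))
        (c 0 * (2 * b1) + c 1 * b2 + c 3 * (2 * a20) + c 4 * a11)
        (c 1 * b1 + c 2 * (2 * b2) + c 3 * a11 + c 4 * (2 * a02)) := by
  simp [Fintype.linearCombination_apply, Fin.sum_univ_five, pderiv_toyPolarQuadric,
    smul_toyLinForm, toyLinForm_add]

theorem diffAlgHom_toyLinForm_toyPerazzoForm :
    diffAlgHom K (Fin 5) (toyLinForm a20 a11 a02 b1 b2) (toyPerazzoForm K) =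
      toyPolarQuadric a20 a11 a02 b1 b2 := by
  rw [diffAlgHom_toyLinForm_apply]
  simp only [pderiv_toyPerazzoForm, toyPolarQuadric, toyLinForm, Matrix.cons_val, smul_eq_C_mul,
    C_mul, C_0]
  ring

theorem diffAlgHom_toyLinForm_toyPolarQuadric :
    diffAlgHom K (Fin 5) (toyLinForm a20 a11 a02 b1 b2) (toyPolarQuadric a20 a11 a02 b1 b2) =
      toyLinForm (2 * b1 ^ 2) (2 * b1 * b2) (2 * b2 ^ 2) (4 * a20 * b1 + 2 * a11 * b2)
        (2 * a11 * b1 + 4 * a02 * b2) := by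
  rw [diffAlgHom_toyLinForm_apply]
  simp only [pderiv_toyPolarQuadric, Matrix.cons_val, smul_toyLinForm, toyLinForm_add]
  congr 1 <;> ring

theorem diffAlgHom_toyLinForm_toyLinForm (c20 c11 c02 d1 d2 : K) :
    diffAlgHom K (Fin 5) (toyLinForm a20 a11 a02 b1 b2) (toyLinForm c20 c11 c02 d1 d2) =
      C (a20 * c20 + a11 * c11 + a02 * c02 + b1 * d1 + b2 * d2) := by
  simp [diffAlgHom_toyLinForm_apply, pderiv_toyLinForm, smul_eq_C_mul]

theorem diffAlgHom_toyLinForm_pow_two_toyPerazzoForm :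
    (diffAlgHom K (Fin 5) (toyLinForm a20 a11 a02 b1 b2) ^ 2) (toyPerazzoForm K) =
      toyLinForm (2 * b1 ^ 2) (2 * b1 * b2) (2 * b2 ^ 2) (4 * a20 * b1 + 2 * a11 * b2)
        (2 * a11 * b1 + 4 * a02 * b2) := by
  rw [pow_two, Module.End.mul_apply, diffAlgHom_toyLinForm_toyPerazzoForm,
    diffAlgHom_toyLinForm_toyPolarQuadric]

theorem diffAlgHom_toyLinForm_pow_three_toyPerazzoForm :
    (diffAlgHom K (Fin 5) (toyLinForm a20 a11 a02 b1 b2) ^ 3) (toyPerazzoForm K) =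
      C (6 * eval ![a20, a11, a02, b1, b2] (toyPerazzoForm K)) := by
  rw [pow_succ', Module.End.mul_apply, diffAlgHom_toyLinForm_pow_two_toyPerazzoForm,
    diffAlgHom_toyLinForm_toyLinForm]
  congr 1
  simp only [toyPerazzoForm, map_add, map_mul, map_pow, eval_X, Matrix.cons_val]
  ring

end CommSemiring

section Field

variable [Field K] [NeZero (2 : K)]

theorem linearIndependent_pderiv_toyPerazzoForm :
    LinearIndependent K fun i => pderiv i (toyPerazzoForm K) := by
  rw [Fintype.linearIndependent_iff]
  intro c hc
  have eval_eq_zero (x : Fin 5 → K) : c 0 * x 3 ^ 2 + c 1 * (x 3 * x 4) + c 2 * x 4 ^ 2 +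
      c 3 * (2 * x 0 * x 3 + x 1 * x 4) + c 4 * (x 1 * x 3 + 2 * x 2 * x 4) = 0 := by
    simpa [Fin.sum_univ_five, pderiv_toyPerazzoForm, mul_add, ← add_assoc]
      using congrArg (eval x) hc
  have h0 : c 0 = 0 := by simpa using eval_eq_zero ![0, 0, 0, 1, 0]
  have h2 : c 2 = 0 := by simpa using eval_eq_zero ![0, 0, 0, 0, 1]
  have h1 : c 1 = 0 := by simpa [h0, h2] using eval_eq_zero ![0, 0, 0, 1, 1]
  have h3 : c 3 = 0 := by simpa [h0, NeZero.ne] using eval_eq_zero ![1, 0, 0, 1, 0]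
  have h4 : c 4 = 0 := by simpa [h2, NeZero.ne] using eval_eq_zero ![0, 0, 1, 0, 1]
  intro i
  fin_cases i <;> assumption

theorem iterate_partials_two_span_toyPerazzoForm :
    partials^[2] (K ∙ toyPerazzoForm K) = homogeneousSubmodule (Fin 5) K 1 := by
  refine le_antisymm (iterate_partials_le_homogeneousSubmodule
    ((Submodule.span_singleton_le_iff_mem _ _).2 isHomogeneous_toyPerazzoForm) 2) ?_
  have pderiv_pderiv_mem (i j : Fin 5) :
      pderiv i (pderiv j (toyPerazzoForm K)) ∈ partials^[2] (K ∙ toyPerazzoForm K) :=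
    pderiv_mem_partials i (pderiv_mem_partials j (Submodule.mem_span_singleton_self _))
  have mem_of_C_two_mul_mem {p : MvPolynomial (Fin 5) K}
      (h : C 2 * p ∈ partials^[2] (K ∙ toyPerazzoForm K)) :
      p ∈ partials^[2] (K ∙ toyPerazzoForm K) := by
    rwa [← smul_eq_C_mul, Submodule.smul_mem_iff _ two_ne_zero] at h
  rw [homogeneousSubmodule_one_eq_span_X, Submodule.span_le, Set.range_subset_iff]
  intro i
  fin_cases i
  · exact mem_of_C_two_mul_mem (by
      simpa [pderiv_toyPerazzoForm, pderiv_X] using pderiv_pderiv_mem 3 3)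
  · simpa [pderiv_toyPerazzoForm, pderiv_X] using pderiv_pderiv_mem 4 3
  · exact mem_of_C_two_mul_mem (by
      simpa [pderiv_toyPerazzoForm, pderiv_X] using pderiv_pderiv_mem 4 4)
  · simpa [pderiv_toyPerazzoForm, pderiv_X] using pderiv_pderiv_mem 4 1
  · simpa [pderiv_toyPerazzoForm, pderiv_X] using pderiv_pderiv_mem 3 1

theorem finrank_inverseSystem_toyPerazzoForm :
    Module.finrank K (inverseSystem (toyPerazzoForm K)) = 12 := by
  have finrank_partials_zero : Module.finrank K ↥(partials^[0] (K ∙ toyPerazzoForm K)) = 1 :=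
    finrank_span_singleton fun h => by
      simpa [h] using (linearIndependent_pderiv_toyPerazzoForm (K := K)).ne_zero 0
  have finrank_partials_one : Module.finrank K ↥(partials^[1] (K ∙ toyPerazzoForm K)) = 5 := by
    rw [Function.iterate_one, partials_span_singleton,
      finrank_span_eq_card linearIndependent_pderiv_toyPerazzoForm, Fintype.card_fin]
  have finrank_partials_two : Module.finrank K ↥(partials^[2] (K ∙ toyPerazzoForm K)) = 5 := by
    rw [iterate_partials_two_span_toyPerazzoForm, finrank_homogeneousSubmodule_one,
      Fintype.card_fin]
  have finrank_partials_three : Module.finrank K ↥(partials^[3] (K ∙ toyPerazzoForm K)) = 1 := by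
    rw [Function.iterate_succ_apply', iterate_partials_two_span_toyPerazzoForm]
    exact finrank_partials_eq_one le_rfl <|
      (Submodule.ne_bot_iff _).2 ⟨X 0, isHomogeneous_X K 0, X_ne_zero 0⟩
  simp only [finrank_inverseSystem isHomogeneous_toyPerazzoForm, Finset.sum_range_succ,
    Finset.sum_range_zero, finrank_partials_zero, finrank_partials_one, finrank_partials_two,
    finrank_partials_three]

theorem ker_linearCombination_pderiv_toyPolarQuadric (a20 a11 a02 : K) {b1 b2 : K}
    (hb : b1 ≠ 0 ∨ b2 ≠ 0) :
    LinearMap.ker (Fintype.linearCombination K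
        fun i => pderiv i (toyPolarQuadric a20 a11 a02 b1 b2)) =
      K ∙ ![b2 ^ 2, -(2 * b1 * b2), b1 ^ 2, 0, 0] := by
  ext c
  rw [LinearMap.mem_ker, linearCombination_pderiv_toyPolarQuadric, toyLinForm_eq_zero_iff]
  constructor
  · rintro ⟨h0, h1, h2, h3, h4⟩
    have hc3 : c 3 = 0 := by rcases hb with hb | hb <;> simp_all [NeZero.ne]
    have hc4 : c 4 = 0 := by rcases hb with hb | hb <;> simp_all [NeZero.ne]
    simp only [hc3, hc4, zero_mul, add_zero] at h3 h4
    rcases hb with hb | hb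
    · rw [← Submodule.smul_mem_iff _ (mul_ne_zero two_ne_zero (pow_ne_zero 2 hb))]
      refine Submodule.mem_span_singleton.2 ⟨2 * c 2, ?_⟩
      ext i
      fin_cases i
      · change 2 * c 2 * b2 ^ 2 = 2 * b1 ^ 2 * c 0
        linear_combination b2 * h4 - b1 * h3
      · change 2 * c 2 * -(2 * b1 * b2) = 2 * b1 ^ 2 * c 1
        linear_combination -2 * b1 * h4
      · change 2 * c 2 * b1 ^ 2 = 2 * b1 ^ 2 * c 2
        ring
      · simp [hc3]
      · simp [hc4]
    · rw [← Submodule.smul_mem_iff _ (mul_ne_zero two_ne_zero (pow_ne_zero 2 hb))]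
      refine Submodule.mem_span_singleton.2 ⟨2 * c 0, ?_⟩
      ext i
      fin_cases i
      · change 2 * c 0 * b2 ^ 2 = 2 * b2 ^ 2 * c 0
        ring
      · change 2 * c 0 * -(2 * b1 * b2) = 2 * b2 ^ 2 * c 1
        linear_combination -2 * b2 * h3
      · change 2 * c 0 * b1 ^ 2 = 2 * b2 ^ 2 * c 2
        linear_combination b1 * h3 - b2 * h4
      · simp [hc3]
      · simp [hc4]
  · rw [Submodule.mem_span_singleton]
    rintro ⟨t, rfl⟩
    simp only [Pi.smul_apply, smul_eq_mul, Matrix.cons_val]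
    refine ⟨?_, ?_, ?_, ?_, ?_⟩ <;> ring

theorem finrank_partials_span_toyPolarQuadric (a20 a11 a02 : K) {b1 b2 : K}
    (hb : b1 ≠ 0 ∨ b2 ≠ 0) :
    Module.finrank K ↥(partials (K ∙ toyPolarQuadric a20 a11 a02 b1 b2)) = 4 := by
  have rank_nullity := LinearMap.finrank_range_add_finrank_ker
    (Fintype.linearCombination K fun i => pderiv i (toyPolarQuadric a20 a11 a02 b1 b2))
  have kernel_ne_zero : ![b2 ^ 2, -(2 * b1 * b2), b1 ^ 2, 0, 0] ≠ 0 := fun h =>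
    hb.elim (· (eq_zero_of_pow_eq_zero (congrFun h 2))) (· (eq_zero_of_pow_eq_zero (congrFun h 0)))
  rw [ker_linearCombination_pderiv_toyPolarQuadric _ _ _ hb, finrank_span_singleton kernel_ne_zero,
    Fintype.range_linearCombination, ← partials_span_singleton, Module.finrank_fin_fun]
    at rank_nullity
  exact Nat.add_right_cancel rank_nullity

theorem finrank_inverseSystem_toyPolarQuadric (a20 a11 a02 : K) {b1 b2 : K}
    (hb : b1 ≠ 0 ∨ b2 ≠ 0) :
    Module.finrank K (inverseSystem (toyPolarQuadric a20 a11 a02 b1 b2)) = 6 := by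
  have finrank_partials := finrank_partials_span_toyPolarQuadric a20 a11 a02 hb
  rw [finrank_inverseSystem_of_isHomogeneous_two (isHomogeneous_toyPolarQuadric _ _ _ _ _),
    finrank_partials]
  intro h
  rw [h, finrank_bot] at finrank_partials
  exact absurd finrank_partials (by decide)

end Field

end ToyPerazzo

theorem jordanType_toyPerazzo_middle_general
    (K : Type*) [Field K] [NeZero (2 : K)] (a20 a11 a02 b1 b2 : K)
    (hb : b1 ≠ 0 ∨ b2 ≠ 0) (hF : eval ![a20, a11, a02, b1, b2] (toyPerazzoForm K) = 0) :
    IsJordanTypeMult (K := K)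
      (Ideal.Quotient.mk (annIdeal (toyPerazzoForm K)) (toyLinForm a20 a11 a02 b1 b2))
      (fun k => if k = 3 then 2 else if k = 2 then 2 else if k = 1 then 2 else 0) := by
  have two_ne_zero : (2 : K) ≠ 0 := NeZero.ne 2
  have rank_zero := rkPow_mk_annIdeal (toyPerazzoForm K) (toyLinForm a20 a11 a02 b1 b2) 0
  have rank_one := rkPow_mk_annIdeal (toyPerazzoForm K) (toyLinForm a20 a11 a02 b1 b2) 1
  have rank_two := rkPow_mk_annIdeal (toyPerazzoForm K) (toyLinForm a20 a11 a02 b1 b2) 2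
  rw [pow_zero, Module.End.one_apply, finrank_inverseSystem_toyPerazzoForm] at rank_zero
  rw [pow_one, diffAlgHom_toyLinForm_toyPerazzoForm,
    finrank_inverseSystem_toyPolarQuadric _ _ _ hb] at rank_one
  rw [diffAlgHom_toyLinForm_pow_two_toyPerazzoForm, finrank_inverseSystem_of_isHomogeneous_one
    (isHomogeneous_toyLinForm _ _ _ _ _) (mt (toyLinForm_eq_zero_iff _ _ _ _ _).1 (by grind))]
    at rank_two
  have rank_add_three (k : ℕ) : rkPow (K := K) (Ideal.Quotient.mk (annIdeal (toyPerazzoForm K))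
      (toyLinForm a20 a11 a02 b1 b2)) (k + 3) = 0 := by
    rw [rkPow_mk_annIdeal, pow_add, Module.End.mul_apply,
      diffAlgHom_toyLinForm_pow_three_toyPerazzoForm, hF, mul_zero, C_0, map_zero,
      inverseSystem, map_zero, LinearMap.range_zero, finrank_bot]
  rintro (_ | _ | _ | _ | k) hk
  · omega
  · simp [rank_zero, rank_one, rank_two]
  · simp [rank_one, rank_two, rank_add_three 0]
  · simp [rank_two, rank_add_three 0, rank_add_three 1]
  · simp [rank_add_three k, rank_add_three (k + 1), rank_add_three (k + 2)]

/-- Example 3.1(a): for `F = X_{2,0}Y_1² + X_{1,1}Y_1Y_2 + X_{0,2}Y_2²`, if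
(i) `b_1 ≠ 0`, `b_2 = 0`, `a_{2,0} = 0`; or (ii) `b_2 ≠ 0`, `b_1 = 0`, `a_{0,2} = 0`; or
(iii) `a_{2,0} = a_{1,1} = a_{0,2} = 0` and `(b_1, b_2) ≠ (0,0)`, then the Jordan type of
`ℓ` in `A_F` is `(3², 2², 1²)`. -/
theorem jordanType_toyPerazzo_middle
    (K : Type*) [Field K] [CharZero K] (a20 a11 a02 b1 b2 : K)
    (hyp : (b1 ≠ 0 ∧ b2 = 0 ∧ a20 = 0) ∨ (b2 ≠ 0 ∧ b1 = 0 ∧ a02 = 0) ∨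
      (a20 = 0 ∧ a11 = 0 ∧ a02 = 0 ∧ (b1 ≠ 0 ∨ b2 ≠ 0))) :
    IsJordanTypeMult (K := K)
      (Ideal.Quotient.mk (annIdeal (toyPerazzoForm K)) (toyLinForm a20 a11 a02 b1 b2))
      (fun k => if k = 3 then 2 else if k = 2 then 2 else if k = 1 then 2 else 0) := by
  refine jordanType_toyPerazzo_middle_general K a20 a11 a02 b1 b2 (by tauto) ?_
  rcases hyp with ⟨_, rfl, rfl⟩ | ⟨_, rfl, rfl⟩ | ⟨rfl, rfl, rfl, _⟩ <;> simp [toyPerazzoForm]
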